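/- arXiv:1701.06644 — 2 statements merged into one kernel-verified Lean document; each statement's English description precedes it below -/
import Mathlib

section
/- Let M = (S, A, δ) be a finite fuzzy transition system and let the discount factor be γ = 1. Then there exists n ≤ |Θ_M| · |S|² such that Δ^{n+1}(⊥) = Δ^n(⊥); consequently Δ^n(⊥) equals the least fixpoint sup_{m∈ℕ} Δ^m(⊥) of Δ. -/
/-!
Write `Θ` for `ThetaM δ`, a finite subset of `[0,1]`. The functional `Δ` (at `γ = 1`) is monotone on
nonnegative functions and maps `Θ`-valued functions to `Θ`-valued functions. The only part of the
latter that is not a combination of finite maxima and minima is the infimum in the lifted distance: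
there, any feasible `x` can be rounded down entrywise to `Θ`. Rounding down is monotone, hence commutes
with maxima and minima, and it fixes `Θ`, so the rounded `x` is still feasible and its objective value
is the rounded, hence no larger, objective value (`round_down_feasible`). The infimum is therefore a
minimum over a finite subset of `Θ` (`liftDist_mem`).

Consequently the iterates form an ascending chain of functions `S × S → Θ`. The potential
`∑ (s,t), #{θ ∈ Θ | θ < d s t}` increases strictly at each step at which the chain does not stabilise
and never exceeds `|Θ| · |S|²`, so the chain stabilises within that many steps (`chain_stabilises`).
-/

open Finset
open scoped Classical

noncomputable section

variable {S A : Type*} [Fintype S] [Nonempty S] [Fintype A] [Nonempty A]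

/-- The maximum value of a fuzzy subset `μ : S → ℝ` over the finite nonempty set `S`. -/
def maxS (μ : S → ℝ) : ℝ := Finset.univ.sup' Finset.univ_nonempty μ

/-- Feasibility for the mathematical program defining the lifted distance. -/
def Feasible (μ η : S → ℝ) (x : S → S → ℝ) : Prop :=
  (∀ u v, 0 ≤ x u v) ∧ (∀ u, maxS (x u) = μ u) ∧ (∀ v, maxS (fun u => x u v) = η v)

/-- The lifted distance `d̂(μ,η)` induced by `d` on fuzzy subsets. -/
def liftDist (d : S → S → ℝ) (μ η : S → ℝ) : ℝ :=
  if maxS μ = maxS η then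
    sInf {r : ℝ | ∃ x : S → S → ℝ, Feasible μ η x ∧
      r = Finset.univ.sup' Finset.univ_nonempty
            (fun p : S × S => min (d p.1 p.2) (x p.1 p.2))}
  else 1

/-- Distance from a fuzzy subset to a finite set of fuzzy subsets. -/
def liftDistSet (d : S → S → ℝ) (μ : S → ℝ) (W : Finset (S → ℝ)) : ℝ :=
  if h : W.Nonempty then W.inf' h (liftDist d μ) else 1

/-- Max of `f` over a finite set of fuzzy subsets, `0` if the set is empty. -/
def sup0 (Y : Finset (S → ℝ)) (f : (S → ℝ) → ℝ) : ℝ :=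
  if h : Y.Nonempty then Y.sup' h f else 0

/-- Hausdorff distance induced by `d` on finite sets of fuzzy subsets. -/
def Hdist (d : S → S → ℝ) (Y Z : Finset (S → ℝ)) : ℝ :=
  if Y = ∅ ∧ Z = ∅ then 0
  else max (sup0 Y fun μ => liftDistSet d μ Z) (sup0 Z fun ν => liftDistSet d ν Y)

/-- The functional `Δ` with discount factor `γ` on a fuzzy transition system `δ`. -/
def Delta (γ : ℝ) (δ : S → A → Finset (S → ℝ)) (d : S → S → ℝ) : S → S → ℝ :=
  fun s t => γ * Finset.univ.sup' Finset.univ_nonempty (fun a => Hdist d (δ s a) (δ t a))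

/-- All fuzzy subsets occurring in the transition function take values in `[0,1]`. -/
def FTSvalid (δ : S → A → Finset (S → ℝ)) : Prop :=
  ∀ s a, ∀ μ ∈ δ s a, ∀ u, μ u ∈ Set.Icc (0:ℝ) 1

/-- The set `Θ_M` of membership values occurring in the system, together with `0` and `1`. -/
def ThetaM (δ : S → A → Finset (S → ℝ)) : Set ℝ :=
  {r : ℝ | ∃ s a μ, μ ∈ δ s a ∧ ∃ u, μ u = r} ∪ {0, 1}

/-- The supremum norm of the difference of two distance functions. -/
def dnorm (d d' : S → S → ℝ) : ℝ :=
  Finset.univ.sup' Finset.univ_nonempty (fun p : S × S => |d p.1 p.2 - d' p.1 p.2|)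

end

/-! ### Rounding down to a finite set of values -/

/-- Rounding down to a finite set `T` of nonnegative reals containing `0`. -/
lemma exists_round_down {T : Set ℝ} (hT : T.Finite) (h0 : (0:ℝ) ∈ T) (hpos : ∀ t ∈ T, 0 ≤ t) :
    ∃ f : ℝ → ℝ, Monotone f ∧ (∀ x, f x ∈ T) ∧ (∀ x ∈ T, f x = x) ∧ ∀ x, 0 ≤ x → f x ≤ x := by
  have hne : hT.toFinset.Nonempty := ⟨0, by simpa using h0⟩
  have hle : ∀ x : ℝ, 0 ≤ x →
      hT.toFinset.sup' hne (fun t => if t ≤ x then t else 0) ≤ x := by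
    intro x hx
    refine Finset.sup'_le _ _ fun t _ => ?_
    split_ifs with h
    · exact h
    · exact hx
  refine ⟨fun x => hT.toFinset.sup' hne (fun t => if t ≤ x then t else 0), ?_, ?_, ?_, hle⟩
  · intro x y hxy
    refine Finset.sup'_mono_fun fun t ht => ?_
    have := hpos t (by simpa using ht)
    split_ifs with h1 h2
    · exact le_rfl
    · exact absurd (h1.trans hxy) h2
    · exact this
    · exact le_rfl
  · intro x
    obtain ⟨t, ht, h⟩ := Finset.exists_mem_eq_sup' hne (fun t => if t ≤ x then t else 0)
    simp only
    rw [h]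
    split_ifs
    · simpa using ht
    · exact h0
  · intro x hx
    refine le_antisymm (hle x (hpos x hx)) ?_
    have h := Finset.le_sup' (fun t => if t ≤ x then t else 0)
      (show x ∈ hT.toFinset by simpa using hx)
    rwa [if_pos le_rfl] at h

/-! ### Monotonicity and value set of the lifted and Hausdorff distances -/

section Lift

variable {S : Type*} [Fintype S] [Nonempty S]

lemma le_maxS (μ : S → ℝ) (u : S) : μ u ≤ maxS μ := Finset.le_sup' μ (Finset.mem_univ u)

lemma maxS_comp {f : ℝ → ℝ} (hf : Monotone f) (μ : S → ℝ) :
    maxS (fun u => f (μ u)) = f (maxS μ) :=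
  (Finset.apply_sup'_eq_sup'_comp _ f fun _ _ => hf.map_max).symm

lemma maxS_min_left (c : ℝ) (μ : S → ℝ) : maxS (fun u => min c (μ u)) = min c (maxS μ) :=
  maxS_comp (f := fun r => min c r) (fun _ _ h => min_le_min le_rfl h) μ

/-- The objective of the program defining the lifted distance. -/
noncomputable def objective (d x : S → S → ℝ) : ℝ :=
  Finset.univ.sup' Finset.univ_nonempty (fun p : S × S => min (d p.1 p.2) (x p.1 p.2))

/-- The coupling `min (μ u) (η v)` is feasible as soon as the heights agree. -/
lemma feasible_min {μ η : S → ℝ} (hμ : ∀ u, 0 ≤ μ u) (hη : ∀ u, 0 ≤ η u)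
    (h : maxS μ = maxS η) : Feasible μ η (fun u v => min (μ u) (η v)) := by
  refine ⟨fun u v => le_min (hμ u) (hη v), fun u => ?_, fun v => ?_⟩
  · rw [maxS_min_left, ← h, min_eq_left (le_maxS μ u)]
  · simp_rw [min_comm (μ _)]
    rw [maxS_min_left, h, min_eq_left (le_maxS η v)]

lemma objective_nonneg {d x : S → S → ℝ} (hd : ∀ s t, 0 ≤ d s t) (hx : ∀ s t, 0 ≤ x s t) :
    0 ≤ objective d x := by
  obtain ⟨s⟩ := ‹Nonempty S›
  exact (le_min (hd s s) (hx s s)).trans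
    (Finset.le_sup' (fun p : S × S => min (d p.1 p.2) (x p.1 p.2)) (Finset.mem_univ (s, s)))

lemma objective_mono {d d' x : S → S → ℝ} (h : ∀ s t, d s t ≤ d' s t) :
    objective d x ≤ objective d' x :=
  Finset.sup'_mono_fun fun p _ => min_le_min (h p.1 p.2) le_rfl

/-- The set of objective values whose infimum is the lifted distance. -/
def values (d : S → S → ℝ) (μ η : S → ℝ) : Set ℝ :=
  {r : ℝ | ∃ x : S → S → ℝ, Feasible μ η x ∧ r = objective d x}

lemma values_bddBelow {d : S → S → ℝ} (hd : ∀ s t, 0 ≤ d s t) (μ η : S → ℝ) :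
    BddBelow (values d μ η) := by
  refine ⟨0, ?_⟩
  rintro _ ⟨x, hx, rfl⟩
  exact objective_nonneg hd hx.1

lemma liftDist_eq (d : S → S → ℝ) (μ η : S → ℝ) :
    liftDist d μ η = if maxS μ = maxS η then sInf (values d μ η) else 1 := rfl

lemma liftDist_mono {d d' : S → S → ℝ} (hd : ∀ s t, 0 ≤ d s t) (h : ∀ s t, d s t ≤ d' s t)
    {μ η : S → ℝ} (hμ : ∀ u, 0 ≤ μ u) (hη : ∀ u, 0 ≤ η u) :
    liftDist d μ η ≤ liftDist d' μ η := by
  rw [liftDist_eq, liftDist_eq]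
  split_ifs with hm
  · refine le_csInf ⟨_, _, feasible_min hμ hη hm, rfl⟩ ?_
    rintro _ ⟨x, hx, rfl⟩
    exact (csInf_le (values_bddBelow hd μ η) ⟨x, hx, rfl⟩).trans (objective_mono h)
  · exact le_rfl

/-- Rounding a feasible `x` down to `T` keeps it feasible and does not increase the objective, which
becomes an element of `T`. -/
lemma round_down_feasible {T : Set ℝ} (hT : T.Finite) (h0 : (0:ℝ) ∈ T) (hpos : ∀ t ∈ T, 0 ≤ t)
    {d : S → S → ℝ} (hd : ∀ s t, d s t ∈ T) {μ η : S → ℝ} (hμ : ∀ u, μ u ∈ T)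
    (hη : ∀ u, η u ∈ T) {r : ℝ} (hr : r ∈ values d μ η) :
    ∃ r' ∈ values d μ η, r' ∈ T ∧ r' ≤ r := by
  obtain ⟨f, hf, hfT, hfix, hfle⟩ := exists_round_down hT h0 hpos
  obtain ⟨x, hx, rfl⟩ := hr
  have hfobj : objective d (fun u v => f (x u v)) = f (objective d x) := by
    unfold objective
    rw [Finset.apply_sup'_eq_sup'_comp _ f fun _ _ => hf.map_max]
    refine Finset.sup'_congr _ rfl fun p _ => ?_
    simp only [Function.comp]
    rw [hf.map_min, hfix _ (hd p.1 p.2)]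
  refine ⟨f (objective d x), ⟨fun u v => f (x u v), ⟨fun u v => hpos _ (hfT _), fun u => ?_,
    fun v => ?_⟩, hfobj.symm⟩, hfT _,
    hfle _ (objective_nonneg (fun s t => hpos _ (hd s t)) hx.1)⟩
  · rw [maxS_comp hf (x u), hx.2.1, hfix _ (hμ u)]
  · rw [maxS_comp hf (fun u => x u v), hx.2.2, hfix _ (hη v)]

lemma liftDist_mem {T : Set ℝ} (hT : T.Finite) (h0 : (0:ℝ) ∈ T) (h1 : (1:ℝ) ∈ T)
    (hpos : ∀ t ∈ T, 0 ≤ t) {d : S → S → ℝ} (hd : ∀ s t, d s t ∈ T) {μ η : S → ℝ}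
    (hμ : ∀ u, μ u ∈ T) (hη : ∀ u, η u ∈ T) : liftDist d μ η ∈ T := by
  rw [liftDist_eq]
  split_ifs with hm
  · have hne : (values d μ η ∩ T).Nonempty := by
      obtain ⟨r, hr, hrT, _⟩ := round_down_feasible hT h0 hpos hd hμ hη
        ⟨_, feasible_min (fun u => hpos _ (hμ u)) (fun u => hpos _ (hη u)) hm, rfl⟩
      exact ⟨r, hr, hrT⟩
    obtain ⟨m, ⟨hmv, hmT⟩, hmin⟩ :=
      Set.exists_min_image _ id (hT.subset Set.inter_subset_right) hne
    have hleast : IsLeast (values d μ η) m := by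
      refine ⟨hmv, fun r hr => ?_⟩
      obtain ⟨r', hr', hrT, hle⟩ := round_down_feasible hT h0 hpos hd hμ hη hr
      exact (hmin r' ⟨hr', hrT⟩).trans hle
    rwa [hleast.csInf_eq]
  · exact h1

lemma liftDistSet_mono {d d' : S → S → ℝ} (hd : ∀ s t, 0 ≤ d s t) (h : ∀ s t, d s t ≤ d' s t)
    {μ : S → ℝ} {W : Finset (S → ℝ)} (hμ : ∀ u, 0 ≤ μ u) (hW : ∀ η ∈ W, ∀ u, 0 ≤ η u) :
    liftDistSet d μ W ≤ liftDistSet d' μ W := by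
  unfold liftDistSet
  split_ifs
  · exact Finset.inf'_mono_fun fun η hη => liftDist_mono hd h hμ (hW η hη)
  · exact le_rfl

lemma liftDistSet_mem {T : Set ℝ} (hT : T.Finite) (h0 : (0:ℝ) ∈ T) (h1 : (1:ℝ) ∈ T)
    (hpos : ∀ t ∈ T, 0 ≤ t) {d : S → S → ℝ} (hd : ∀ s t, d s t ∈ T) {μ : S → ℝ}
    {W : Finset (S → ℝ)} (hμ : ∀ u, μ u ∈ T) (hW : ∀ η ∈ W, ∀ u, η u ∈ T) :
    liftDistSet d μ W ∈ T := by
  unfold liftDistSet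
  split_ifs with hne
  · obtain ⟨η, hη, h⟩ := Finset.exists_mem_eq_inf' hne (liftDist d μ)
    rw [h]
    exact liftDist_mem hT h0 h1 hpos hd hμ (hW η hη)
  · exact h1

lemma sup0_mono {Y : Finset (S → ℝ)} {f g : (S → ℝ) → ℝ} (h : ∀ μ ∈ Y, f μ ≤ g μ) :
    sup0 Y f ≤ sup0 Y g := by
  unfold sup0
  split_ifs
  · exact Finset.sup'_mono_fun h
  · exact le_rfl

lemma sup0_mem {T : Set ℝ} (h0 : (0:ℝ) ∈ T) {Y : Finset (S → ℝ)} {f : (S → ℝ) → ℝ}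
    (h : ∀ μ ∈ Y, f μ ∈ T) : sup0 Y f ∈ T := by
  unfold sup0
  split_ifs with hne
  · obtain ⟨μ, hμ, he⟩ := Finset.exists_mem_eq_sup' hne f
    rw [he]
    exact h μ hμ
  · exact h0

lemma Hdist_mono {d d' : S → S → ℝ} (hd : ∀ s t, 0 ≤ d s t) (h : ∀ s t, d s t ≤ d' s t)
    {Y Z : Finset (S → ℝ)} (hY : ∀ η ∈ Y, ∀ u, 0 ≤ η u) (hZ : ∀ η ∈ Z, ∀ u, 0 ≤ η u) :
    Hdist d Y Z ≤ Hdist d' Y Z := by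
  unfold Hdist
  split_ifs
  · exact le_rfl
  · exact max_le_max (sup0_mono fun μ hμ => liftDistSet_mono hd h (hY μ hμ) hZ)
      (sup0_mono fun μ hμ => liftDistSet_mono hd h (hZ μ hμ) hY)

lemma Hdist_mem {T : Set ℝ} (hT : T.Finite) (h0 : (0:ℝ) ∈ T) (h1 : (1:ℝ) ∈ T)
    (hpos : ∀ t ∈ T, 0 ≤ t) {d : S → S → ℝ} (hd : ∀ s t, d s t ∈ T)
    {Y Z : Finset (S → ℝ)} (hY : ∀ η ∈ Y, ∀ u, η u ∈ T) (hZ : ∀ η ∈ Z, ∀ u, η u ∈ T) :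
    Hdist d Y Z ∈ T := by
  unfold Hdist
  split_ifs
  · exact h0
  · rcases max_choice (sup0 Y fun μ => liftDistSet d μ Z) (sup0 Z fun ν => liftDistSet d ν Y)
      with h | h
    · rw [h]
      exact sup0_mem h0 fun μ hμ => liftDistSet_mem hT h0 h1 hpos hd (hY μ hμ) hZ
    · rw [h]
      exact sup0_mem h0 fun μ hμ => liftDistSet_mem hT h0 h1 hpos hd (hZ μ hμ) hY

end Lift

/-! ### Ascending chains of functions with finitely many values -/

/-- An ascending chain of `T`-valued functions on `P` is stationary at some step up to
`|T| · |P|`. -/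
lemma chain_stabilises {P : Type*} [Fintype P] {T : Set ℝ} (hT : T.Finite) (d : ℕ → P → ℝ)
    (hd : ∀ n p, d n p ∈ T) (hmono : ∀ n p, d n p ≤ d (n + 1) p) :
    ∃ n, n ≤ T.ncard * Fintype.card P ∧ d (n + 1) = d n := by
  by_contra! hne
  let φ : ℕ → ℕ := fun n => ∑ p, (hT.toFinset.filter (· < d n p)).card
  have hφ : ∀ n, φ n ≤ T.ncard * Fintype.card P := by
    intro n
    calc φ n ≤ ∑ _p : P, T.ncard := by
          refine Finset.sum_le_sum fun p _ => ?_
          rw [Set.ncard_eq_toFinset_card T hT]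
          exact Finset.card_filter_le _ _
      _ = T.ncard * Fintype.card P := by simp [mul_comm]
  have hstep : ∀ n ≤ T.ncard * Fintype.card P, φ n < φ (n + 1) := by
    intro n hn
    obtain ⟨p, hp⟩ := Function.ne_iff.mp (hne n hn)
    have hsub : ∀ q, hT.toFinset.filter (· < d n q) ⊆ hT.toFinset.filter (· < d (n + 1) q) :=
      fun q => Finset.monotone_filter_right _ fun t _ ht => lt_of_lt_of_le ht (hmono n q)
    refine Finset.sum_lt_sum (fun q _ => Finset.card_le_card (hsub q)) ⟨p, Finset.mem_univ p, ?_⟩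
    -- The value `d n p` itself is counted at step `n + 1` but not at step `n`.
    refine Finset.card_lt_card ((Finset.ssubset_iff_of_subset (hsub p)).2 ⟨d n p, ?_, ?_⟩)
    · simpa using ⟨hd n p, lt_of_le_of_ne (hmono n p) (Ne.symm hp)⟩
    · simp
  have hgrow : ∀ n ≤ T.ncard * Fintype.card P + 1, n ≤ φ n := by
    intro n
    induction n with
    | zero => intro _; exact Nat.zero_le _
    | succ k ih =>
      intro hk
      have h1 := ih (by omega)
      have h2 := hstep k (by omega)
      omega
  have h1 := hgrow _ le_rfl
  have h2 := hφ (T.ncard * Fintype.card P + 1)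
  omega

/-! ### The functional of a fuzzy transition system -/

section System

variable {S A : Type*} [Fintype S] [Nonempty S] [Fintype A] [Nonempty A]

lemma ThetaM_finite (δ : S → A → Finset (S → ℝ)) : (ThetaM δ).Finite := by
  refine Set.Finite.union ?_ (by simp)
  have h : {r : ℝ | ∃ s a μ, μ ∈ δ s a ∧ ∃ u, μ u = r} =
      ⋃ s, ⋃ a, ⋃ μ ∈ δ s a, Set.range μ := by
    ext r
    simp
  rw [h]
  exact Set.finite_iUnion fun s => Set.finite_iUnion fun a =>
    (δ s a).finite_toSet.biUnion fun μ _ => Set.finite_range μ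

lemma Delta_mono {δ : S → A → Finset (S → ℝ)} (hδ : FTSvalid δ) {d d' : S → S → ℝ}
    (hd : ∀ s t, 0 ≤ d s t) (h : ∀ s t, d s t ≤ d' s t) (s t : S) :
    Delta 1 δ d s t ≤ Delta 1 δ d' s t := by
  unfold Delta
  rw [one_mul, one_mul]
  exact Finset.sup'_mono_fun fun a _ => Hdist_mono hd h
    (fun η hη u => (hδ s a η hη u).1) (fun η hη u => (hδ t a η hη u).1)

lemma ThetaM_nonneg {δ : S → A → Finset (S → ℝ)} (hδ : FTSvalid δ) :
    ∀ r ∈ ThetaM δ, 0 ≤ r := by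
  rintro r (⟨s, a, μ, hμ, u, rfl⟩ | rfl | rfl)
  · exact (hδ s a μ hμ u).1
  · exact le_rfl
  · exact zero_le_one

lemma Delta_mem {δ : S → A → Finset (S → ℝ)} (hδ : FTSvalid δ) {d : S → S → ℝ}
    (hd : ∀ s t, d s t ∈ ThetaM δ) (s t : S) : Delta 1 δ d s t ∈ ThetaM δ := by
  unfold Delta
  rw [one_mul]
  obtain ⟨a, _, h⟩ := Finset.exists_mem_eq_sup' Finset.univ_nonempty
    (fun a => Hdist d (δ s a) (δ t a))
  rw [h]
  exact Hdist_mem (ThetaM_finite δ) (Or.inr (by simp)) (Or.inr (by simp)) (ThetaM_nonneg hδ) hd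
    (fun η hη u => Or.inl ⟨s, a, η, hη, u, rfl⟩) (fun η hη u => Or.inl ⟨t, a, η, hη, u, rfl⟩)

end System

/-- for `γ = 1` the Kleene iteration stabilises after at most
`|Θ_M| · |S|²` steps, and the stabilised value is the least fixpoint `sup_m Δ^m(⊥)`. -/
theorem iteration_stabilises {S A : Type*} [Fintype S] [Nonempty S] [Fintype A] [Nonempty A]
    (δ : S → A → Finset (S → ℝ)) (hδ : FTSvalid δ) :
    ∃ n : ℕ, n ≤ (ThetaM δ).ncard * (Fintype.card S)^2 ∧
      (Delta 1 δ)^[n+1] (fun _ _ => 0) = (Delta 1 δ)^[n] (fun _ _ => 0) ∧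
      ∀ s t, (Delta 1 δ)^[n] (fun _ _ => 0) s t =
        ⨆ m : ℕ, (Delta 1 δ)^[m] (fun _ _ => 0) s t := by
  have hmem : ∀ n s t, (Delta 1 δ)^[n] (fun _ _ => 0) s t ∈ ThetaM δ := by
    intro n
    induction n with
    | zero => intro s t; exact Or.inr (by simp)
    | succ k ih =>
      intro s t
      rw [Function.iterate_succ_apply']
      exact Delta_mem hδ ih s t
  have hnonneg : ∀ n s t, 0 ≤ (Delta 1 δ)^[n] (fun _ _ => 0) s t :=
    fun n s t => ThetaM_nonneg hδ _ (hmem n s t)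
  have hstep : ∀ n s t, (Delta 1 δ)^[n] (fun _ _ => 0) s t ≤
      (Delta 1 δ)^[n+1] (fun _ _ => 0) s t := by
    intro n
    induction n with
    | zero => intro s t; exact hnonneg 1 s t
    | succ k ih =>
      intro s t
      rw [Function.iterate_succ_apply', Function.iterate_succ_apply' _ (k + 1)]
      exact Delta_mono hδ (hnonneg k) ih s t
  obtain ⟨n, hn, heq⟩ := chain_stabilises (ThetaM_finite δ)
    (fun n (p : S × S) => (Delta 1 δ)^[n] (fun _ _ => 0) p.1 p.2)
    (fun n p => hmem n p.1 p.2) (fun n p => hstep n p.1 p.2)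
  have hfix : (Delta 1 δ)^[n+1] (fun _ _ => 0) = (Delta 1 δ)^[n] (fun _ _ => 0) := by
    funext s t
    exact congrFun heq (s, t)
  refine ⟨n, by simpa [Fintype.card_prod, sq] using hn, hfix, fun s t => ?_⟩
  have hconst : ∀ k, (Delta 1 δ)^[n + k] (fun _ _ => 0) = (Delta 1 δ)^[n] (fun _ _ => 0) := by
    intro k
    induction k with
    | zero => rfl
    | succ k ih =>
      rw [← add_assoc, Function.iterate_succ_apply', ih,
        ← Function.iterate_succ_apply' (Delta 1 δ), hfix]
  have hmono : Monotone fun m : ℕ => (Delta 1 δ)^[m] (fun _ _ => 0) s t :=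
    monotone_nat_of_le_succ fun m => hstep m s t
  have hub : ∀ m, (Delta 1 δ)^[m] (fun _ _ => 0) s t ≤ (Delta 1 δ)^[n] (fun _ _ => 0) s t := by
    intro m
    rw [← hconst m]
    exact hmono (Nat.le_add_left m n)
  exact le_antisymm (le_ciSup (f := fun m : ℕ => (Delta 1 δ)^[m] (fun _ _ => 0) s t)
    ⟨_, by rintro _ ⟨m, rfl⟩; exact hub m⟩ n) (ciSup_le hub)
end

section
/- Let S be a finite nonempty set. For all functions d, d' : S × S → [0,1] and all fuzzy subsets μ, η of S, it holds that |d̂(μ,η) − d̂'(μ,η)| ≤ max_{u,v∈S} |d(u,v) − d'(u,v)|, where d̂ and d̂' denote the lifted distances induced by d and d' respectively. -/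
/-!
For a fixed feasible `x`, the objective `max min (d(s,t), x(s,t))` moves by at most
`M = max |d - d'|` when `d` is replaced by `d'`, since `min` and `max` are nonexpansive. The set of
feasible `x` does not depend on `d`, so the infimum moves by at most `M` as well
(`liftDist_le_add`), and the theorem follows by symmetry.
-/

open Finset
open scoped Classical

/-- One half of the estimate; the other follows by exchanging `d` and `d'`. The lower bound
on `d` makes the set of objective values bounded below, so that its `sInf` is a true infimum. -/
theorem liftDist_le_add {S : Type*} [Fintype S] [Nonempty S] {d d' : S → S → ℝ}
    (hd : ∀ s t, 0 ≤ d s t) (μ η : S → ℝ) {M : ℝ} (hM : ∀ s t, |d s t - d' s t| ≤ M) :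
    liftDist d μ η ≤ liftDist d' μ η + M := by
  have hM0 : 0 ≤ M := by
    obtain ⟨s⟩ := ‹Nonempty S›
    exact (abs_nonneg _).trans (hM s s)
  unfold liftDist
  split_ifs with h
  · by_cases hne : ∃ x, Feasible μ η x
    · obtain ⟨x₀, hx₀⟩ := hne
      rw [← sub_le_iff_le_add]
      refine le_csInf ⟨_, x₀, hx₀, rfl⟩ ?_
      rintro r ⟨x, hx, rfl⟩
      rw [sub_le_iff_le_add]
      refine csInf_le_of_le ?_ ⟨x, hx, rfl⟩ ?_
      · refine ⟨0, ?_⟩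
        rintro r ⟨y, hy, rfl⟩
        obtain ⟨s⟩ := ‹Nonempty S›
        exact (le_min (hd s s) (hy.1 s s)).trans
          (Finset.le_sup' (fun p : S × S => min (d p.1 p.2) (y p.1 p.2)) (Finset.mem_univ (s, s)))
      · refine Finset.sup'_le _ _ fun p _ => ?_
        have h1 := Finset.le_sup' (fun p : S × S => min (d' p.1 p.2) (x p.1 p.2))
          (Finset.mem_univ p)
        have h2 : min (d p.1 p.2) (x p.1 p.2) ≤ min (d' p.1 p.2) (x p.1 p.2) + M := by
          rw [← min_add_add_right]
          have h3 := (abs_le.1 (hM p.1 p.2)).2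
          exact min_le_min (by linarith) (by linarith)
        exact h2.trans (by gcongr)
    · push Not at hne
      -- With no feasible `x`, both infima are over the empty set and equal `0`.
      simp [hne, hM0]
  · linarith

/-- the lifting is nonexpansive: for all `d, d'` and fuzzy subsets `μ, η`,
`|d̂(μ,η) − d̂'(μ,η)| ≤ max_{u,v} |d(u,v) − d'(u,v)|`. -/
theorem liftDist_nonexpansive {S : Type*} [Fintype S] [Nonempty S]
    (d d' : S → S → ℝ)
    (hd : ∀ s t, d s t ∈ Set.Icc (0:ℝ) 1) (hd' : ∀ s t, d' s t ∈ Set.Icc (0:ℝ) 1)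
    (μ η : S → ℝ)
    (hμ : ∀ s, μ s ∈ Set.Icc (0:ℝ) 1) (hη : ∀ s, η s ∈ Set.Icc (0:ℝ) 1) :
    |liftDist d μ η - liftDist d' μ η| ≤
      Finset.univ.sup' Finset.univ_nonempty
        (fun p : S × S => |d p.1 p.2 - d' p.1 p.2|) := by
  have hM : ∀ s t, |d s t - d' s t| ≤ Finset.univ.sup' Finset.univ_nonempty
      (fun p : S × S => |d p.1 p.2 - d' p.1 p.2|) := fun s t =>
    Finset.le_sup' (fun p : S × S => |d p.1 p.2 - d' p.1 p.2|) (Finset.mem_univ (s, t))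
  rw [abs_sub_le_iff]
  constructor
  · linarith [liftDist_le_add (fun s t => (hd s t).1) μ η hM]
  · linarith [liftDist_le_add (fun s t => (hd' s t).1) μ η
      (fun s t => (abs_sub_comm (d' s t) (d s t)).trans_le (hM s t))]
end
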